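/- Let A be a Noetherian local ring and G a finite subgroup of Aut(A) whose order is invertible in A. If A is a sequentially Cohen-Macaulay local ring, then the invariant subring A^G is a sequentially Cohen-Macaulay local ring. -/

import Mathlib

open IsLocalRing

/-- The (Krull) dimension of a module: `dim_R M = dim (R / ann_R M)`;
the zero module has dimension `⊥` (i.e. `-∞`). -/
noncomputable def moduleDim (R : Type*) [CommRing R] (M : Type*) [AddCommGroup M]
    [Module R M] : WithBot ℕ∞ :=
  ringKrullDim (R ⧸ Module.annihilator R M)

/-- `dimLe d n` means `d ≤ n` where `n : ℤ` and `d` is a dimension in `WithBot ℕ∞`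
(so for `n < 0` this means `d = ⊥`, i.e. the module is zero). -/
def dimLe (d : WithBot ℕ∞) (n : ℤ) : Prop :=
  if 0 ≤ n then d ≤ ((n.toNat : ℕ∞) : WithBot ℕ∞) else d = ⊥

/-- The depth of a module over a Noetherian local ring: the supremum of lengths of
regular sequences on `M` contained in the maximal ideal. -/
noncomputable def moduleDepth (R : Type*) [CommRing R] [IsLocalRing R] (M : Type*)
    [AddCommGroup M] [Module R M] : ℕ∞ :=
  sSup {n : ℕ∞ | ∃ rs : List R, (rs.length : ℕ∞) = n ∧
    (∀ r ∈ rs, r ∈ maximalIdeal R) ∧ RingTheory.Sequence.IsRegular M rs}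

/-- A module over a Noetherian local ring is Cohen-Macaulay if it is zero or
`depth M = dim M`. -/
def IsCMModule (R : Type*) [CommRing R] [IsLocalRing R] (M : Type*) [AddCommGroup M]
    [Module R M] : Prop :=
  Nontrivial M → (moduleDepth R M : WithBot ℕ∞) = moduleDim R M

/-- A module over a (not necessarily local) commutative ring is Cohen-Macaulay if all its
localizations at primes are Cohen-Macaulay. -/
def IsCMModuleGen (R : Type*) [CommRing R] (M : Type*) [AddCommGroup M] [Module R M] : Prop :=
  ∀ (P : Ideal R) [P.IsPrime],
    IsCMModule (Localization.AtPrime P) (LocalizedModule P.primeCompl M)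

/-- `D : Fin (ℓ+1) → Submodule R M` is the dimension filtration of `M`:
`D 0 = 0`, `D ℓ = M`, the chain is strictly increasing, each `D i` (for `i ≥ 1`) is the
largest submodule of its dimension, and every nonzero submodule which is largest among
submodules of dimension at most its own dimension occurs in the chain. -/
def IsDimFiltration (R : Type*) [CommRing R] (M : Type*) [AddCommGroup M] [Module R M]
    (ℓ : ℕ) (D : Fin (ℓ + 1) → Submodule R M) : Prop :=
  D 0 = ⊥ ∧ D (Fin.last ℓ) = ⊤ ∧ StrictMono D ∧
  (∀ i : Fin ℓ, IsGreatest
    {N : Submodule R M | moduleDim R ↥N ≤ moduleDim R ↥(D i.succ)} (D i.succ)) ∧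
  (∀ N : Submodule R M, N ≠ ⊥ →
    IsGreatest {N' : Submodule R M | moduleDim R ↥N' ≤ moduleDim R ↥N} N → ∃ i, D i = N)

/-- A module over a local ring is sequentially Cohen-Macaulay if the consecutive quotients
of its dimension filtration are Cohen-Macaulay. -/
def IsSeqCM (R : Type*) [CommRing R] [IsLocalRing R] (M : Type*) [AddCommGroup M]
    [Module R M] : Prop :=
  ∃ (ℓ : ℕ) (D : Fin (ℓ + 1) → Submodule R M), IsDimFiltration R M ℓ D ∧
    ∀ i : Fin ℓ, IsCMModule R
      (↥(D i.succ) ⧸ (D i.castSucc).comap (D i.succ).subtype)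

/-- Sequentially Cohen-Macaulay over a not necessarily local ring. -/
def IsSeqCMGen (R : Type*) [CommRing R] (M : Type*) [AddCommGroup M] [Module R M] : Prop :=
  ∃ (ℓ : ℕ) (D : Fin (ℓ + 1) → Submodule R M), IsDimFiltration R M ℓ D ∧
    ∀ i : Fin ℓ, IsCMModuleGen R
      (↥(D i.succ) ⧸ (D i.castSucc).comap (D i.succ).subtype)

/-- A local ring is sequentially Cohen-Macaulay if it is so as a module over itself. -/
def IsSeqCMRing (R : Type*) [CommRing R] [IsLocalRing R] : Prop := IsSeqCM R R
/-- The invariant subring `A^G` of a subgroup `G` of ring automorphisms of `A`. -/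
def fixedSubring (A : Type*) [CommRing A] (G : Subgroup (A ≃+* A)) : Subring A where
  carrier := {a : A | ∀ σ ∈ G, σ a = a}
  zero_mem' := by intro σ _; simp
  one_mem' := by intro σ _; simp
  add_mem' := by intro a b ha hb σ hσ; simp [map_add, ha σ hσ, hb σ hσ]
  mul_mem' := by intro a b ha hb σ hσ; simp [map_mul, ha σ hσ, hb σ hσ]
  neg_mem' := by intro a ha σ hσ; simp [map_neg, ha σ hσ]

/-!
The ring `A` is integral over `R = A^G`, and the Reynolds operator `a ↦ |G|⁻¹ ∑ σ, σ a` retracts `A`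
onto `R` as `R`-modules.

Integrality makes the dimension of an `A`-module the same over `A` and over `R`. It also preserves
depth: by prime avoidance, if the maximal ideal of `A` contains an element regular on a finite
`A`-module, then so does the maximal ideal of `R`, since the only prime of `A` containing the image
of the latter is the maximal one. A finite `R`-module which is an `R`-direct summand of a
Cohen-Macaulay `A`-module therefore has at least its depth and at most its dimension, so it is
Cohen-Macaulay.

Let `f : N → M` be an `R`-linear map into an `A`-module with retraction `g`. Contracting along `f`
the largest `A`-submodule of `M` of dimension at most `d` gives the largest such `R`-submodule of
`N`, so the dimension filtration of `M` contracts to that of `N`, up to repetitions. As `f ∘ g` maps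
each term of the filtration of `M` into itself, each quotient for `N` is a direct summand of the
corresponding quotient for `M`.
-/

section Dimension

theorem ringKrullDim_le_of_isIntegral (R S : Type*) [CommRing R] [CommRing S] [Algebra R S]
    [Algebra.IsIntegral R S] : ringKrullDim S ≤ ringKrullDim R :=
  Order.krullDim_le_of_strictMono (PrimeSpectrum.comap (algebraMap R S)) fun _ _ h ↦
    Ideal.IsIntegral.comap_lt_comap h

theorem ringKrullDim_eq_of_isIntegral (R S : Type*) [CommRing R] [CommRing S] [Algebra R S]
    [Algebra.IsIntegral R S] [FaithfulSMul R S] : ringKrullDim S = ringKrullDim R := by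
  refine (ringKrullDim_le_of_isIntegral R S).antisymm (iSup_le fun p ↦ ?_)
  obtain ⟨P, hP⟩ := Algebra.IsIntegral.comap_surjective R S p.head
  have : P.asIdeal.LiesOver p.head.asIdeal := ⟨congrArg PrimeSpectrum.asIdeal hP.symm⟩
  obtain ⟨q, hq, -⟩ := Ideal.exists_ltSeries_of_hasGoingUp p P.asIdeal
  rw [← hq]
  exact Order.LTSeries.length_le_krullDim q

theorem moduleDim_eq_of_isIntegral (R A : Type*) [CommRing R] [CommRing A]
    [Algebra R A] [Algebra.IsIntegral R A] (M : Type*) [AddCommGroup M] [Module R M] [Module A M]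
    [IsScalarTower R A M] : moduleDim A M = moduleDim R M := by
  have : (Module.annihilator A M).LiesOver (Module.annihilator R M) :=
    ⟨Module.comap_annihilator.symm⟩
  exact ringKrullDim_eq_of_isIntegral _ _

variable {R : Type*} [CommRing R]

theorem moduleDim_anti_annihilator {M N : Type*} [AddCommGroup M] [Module R M] [AddCommGroup N]
    [Module R N] (h : Module.annihilator R N ≤ Module.annihilator R M) :
    moduleDim R M ≤ moduleDim R N :=
  ringKrullDim_le_of_surjective _ (Ideal.Quotient.factor_surjective h)

theorem moduleDim_le_of_injective {M N : Type*} [AddCommGroup M] [Module R M] [AddCommGroup N]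
    [Module R N] (f : M →ₗ[R] N) (hf : Function.Injective f) : moduleDim R M ≤ moduleDim R N :=
  moduleDim_anti_annihilator (f.annihilator_le_of_injective hf)

theorem moduleDim_le_of_surjective {M N : Type*} [AddCommGroup M] [Module R M] [AddCommGroup N]
    [Module R N] (f : M →ₗ[R] N) (hf : Function.Surjective f) : moduleDim R N ≤ moduleDim R M :=
  moduleDim_anti_annihilator (f.annihilator_le_of_surjective hf)

/-- Upper sets suffice because a chain in `s ∪ t` then stays in the piece containing its head. -/
theorem krullDim_union_le {α : Type*} [Preorder α] {s t : Set α} (hs : IsUpperSet s)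
    (ht : IsUpperSet t) {d : WithBot ℕ∞} (hsd : Order.krullDim s ≤ d)
    (htd : Order.krullDim t ≤ d) : Order.krullDim ↥(s ∪ t) ≤ d := by
  have length_le {u : Set α} (hu : IsUpperSet u) (p : LTSeries ↥(s ∪ t))
      (hp : p.head.1 ∈ u) : (p.length : WithBot ℕ∞) ≤ Order.krullDim u := by
    let q : LTSeries u :=
      { length := p.length
        toFun i := ⟨p i, hu (p.head_le i) hp⟩
        step := p.step }
    exact Order.LTSeries.length_le_krullDim q
  refine iSup_le fun p ↦ p.head.2.elim (fun h ↦ ?_) fun h ↦ ?_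
  exacts [(length_le hs p h).trans hsd, (length_le ht p h).trans htd]

variable {M : Type*} [AddCommGroup M] [Module R M]

theorem moduleDim_sup_le {N N' : Submodule R M} {d : WithBot ℕ∞} (hN : moduleDim R N ≤ d)
    (hN' : moduleDim R N' ≤ d) : moduleDim R ↥(N ⊔ N') ≤ d := by
  have isUpperSet_zeroLocus (I : Ideal R) :
      IsUpperSet (PrimeSpectrum.zeroLocus (I : Set R)) := fun _ _ hpq hp ↦ Set.Subset.trans hp hpq
  rw [moduleDim, ringKrullDim_quotient] at *
  rw [show Module.annihilator R ↥(N ⊔ N') = _ from Submodule.annihilator_sup N N',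
    PrimeSpectrum.zeroLocus_inf]
  exact krullDim_union_le (isUpperSet_zeroLocus _) (isUpperSet_zeroLocus _) hN hN'

theorem moduleDim_eq_bot_iff : moduleDim R M = ⊥ ↔ Subsingleton M := by
  rw [moduleDim, ringKrullDim, Order.krullDim_eq_bot_iff, PrimeSpectrum.isEmpty_iff_subsingleton,
    Ideal.Quotient.subsingleton_iff, Module.annihilator_eq_top_iff]

/-- `N` is the largest submodule of dimension at most `d`: the members of a dimension filtration
are of this kind. -/
abbrev IsLargestOfDimLE (d : WithBot ℕ∞) (N : Submodule R M) : Prop :=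
  IsGreatest {N' : Submodule R M | moduleDim R N' ≤ d} N

/-- The submodules that are largest of their own dimension. A dimension filtration is a strictly
increasing enumeration of this set. -/
def dimFiltrationTerms (R M : Type*) [CommRing R] [AddCommGroup M] [Module R M] :
    Set (Submodule R M) :=
  {N | IsLargestOfDimLE (moduleDim R N) N}

theorem IsLargestOfDimLE.mem_dimFiltrationTerms {d : WithBot ℕ∞} {N : Submodule R M}
    (h : IsLargestOfDimLE d N) : N ∈ dimFiltrationTerms R M :=
  ⟨le_refl (moduleDim R N), fun N' hN' ↦ h.2 (show moduleDim R N' ≤ d from le_trans hN' h.1)⟩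

theorem exists_isLargestOfDimLE (R M : Type*) [CommRing R] [AddCommGroup M] [Module R M]
    [IsNoetherian R M] (d : WithBot ℕ∞) : ∃ N : Submodule R M, IsLargestOfDimLE d N := by
  obtain ⟨N, hN, hmax⟩ := set_has_maximal_iff_noetherian.2 ‹IsNoetherian R M›
    {N : Submodule R M | moduleDim R N ≤ d}
    ⟨⊥, (moduleDim_eq_bot_iff.2 inferInstance).trans_le bot_le⟩
  refine ⟨N, hN, fun N' hN' ↦ ?_⟩
  exact sup_eq_left.1 (le_sup_left.eq_of_not_lt (hmax (N ⊔ N') (moduleDim_sup_le hN hN'))).symm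

theorem moduleDepth_le_moduleDim (R M : Type*) [CommRing R] [IsNoetherianRing R] [IsLocalRing R]
    [AddCommGroup M] [Module R M] [Module.Finite R M] [Nontrivial M] :
    (moduleDepth R M : WithBot ℕ∞) ≤ moduleDim R M := by
  have length_le {rs : List R} (hrs : RingTheory.Sequence.IsRegular M rs) :
      (rs.length : WithBot ℕ∞) ≤ moduleDim R M := by
    have := hrs.quot_ofList_smul_nontrivial ⊤
    rw [moduleDim, ← Module.supportDim_eq_ringKrullDim_quotient_annihilator,
      ← Module.supportDim_add_length_eq_supportDim_of_isRegular rs hrs]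
    refine le_add_of_nonneg_left ?_
    exact Order.krullDim_nonneg_iff.2 Module.nonempty_support_of_nontrivial.to_subtype
  obtain ⟨d, hd⟩ := WithBot.ne_bot_iff_exists.1
    (ne_bot_of_le_ne_bot WithBot.coe_ne_bot (length_le (.nil R M)))
  rw [← hd, WithBot.coe_le_coe]
  refine sSup_le ?_
  rintro _ ⟨rs, rfl, -, hrs⟩
  exact WithBot.coe_le_coe.1 ((length_le hrs).trans_eq hd.symm)

end Dimension

section Depth

open CategoryTheory Abelian RingTheory.Sequence

universe u v

theorem subsingleton_ext_quotSMulTop {A : Type u} [CommRing A] [Small.{v} A]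
    (N M : ModuleCat.{v} A) {x : A} (hx : IsSMulRegular M x) {i : ℕ}
    (h₁ : Subsingleton (Ext N M i)) (h₂ : Subsingleton (Ext N M (i + 1))) :
    Subsingleton (Ext N (ModuleCat.of A (QuotSMulTop x M)) i) := by
  have zero₁ := AddCommGrpCat.isZero_of_iff_subsingleton.2 h₁
  have zero₂ := AddCommGrpCat.isZero_of_iff_subsingleton.2 h₂
  exact AddCommGrpCat.subsingleton_of_isZero <| ShortComplex.Exact.isZero_of_both_zeros
    ((Ext.covariant_sequence_exact₃' N hx.smulShortComplex_shortExact) i (i + 1) rfl)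
    (zero₁.eq_zero_of_src _) (zero₂.eq_zero_of_tgt _)

theorem maximalIdeal_smul_top_lt_top (A M : Type*) [CommRing A] [IsLocalRing A] [AddCommGroup M]
    [Module A M] [Module.Finite A M] [Nontrivial M] :
    maximalIdeal A • (⊤ : Submodule A M) < ⊤ :=
  (Submodule.top_ne_ideal_smul_of_le_jacobson_annihilator (maximalIdeal_le_jacobson _)).symm.lt_top

/-- The depth drops by at most one modulo `x`, whichever regular `x` is chosen: by a theorem of Rees
it is read off from the vanishing of `Ext (A ⧸ maximalIdeal A) M`. -/
theorem exists_isRegular_quotSMulTop {A : Type u} [CommRing A] [Small.{v} A] [IsNoetherianRing A]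
    [IsLocalRing A] {M : Type v} [AddCommGroup M] [Module A M] [Module.Finite A M] {x : A}
    (hxm : x ∈ maximalIdeal A) (hx : IsSMulRegular M x) {n : ℕ}
    (h : ∃ as : List A, as.length = n + 1 ∧ (∀ a ∈ as, a ∈ maximalIdeal A) ∧ IsRegular M as) :
    ∃ as : List A, as.length = n ∧ (∀ a ∈ as, a ∈ maximalIdeal A) ∧
      IsRegular (QuotSMulTop x M) as := by
  let k := ModuleCat.of A (Shrink.{v} (A ⧸ maximalIdeal A))
  have support_k : Module.support A k = PrimeSpectrum.zeroLocus (maximalIdeal A) := by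
    rw [(Shrink.linearEquiv A (A ⧸ maximalIdeal A)).support_eq, Module.support_eq_zeroLocus,
      Ideal.annihilator_quotient]
  obtain ⟨as, hlen, hmem, has⟩ := h
  have : Nontrivial M := has.nontrivial
  have subsingleton_ext := ModuleCat.subsingleton_ext_of_exists_isRegular (maximalIdeal A) k
    support_k.le (ModuleCat.of A M) (maximalIdeal_smul_top_lt_top A M) as hmem has
  have := nontrivial_quotSMulTop_of_mem_maximalIdeal M hxm
  refine ModuleCat.exists_isRegular_of_exists_subsingleton_ext (maximalIdeal A) n
    (ModuleCat.of A (QuotSMulTop x M)) (maximalIdeal_smul_top_lt_top A _) k support_k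
    fun i hi ↦ ?_
  exact subsingleton_ext_quotSMulTop k (ModuleCat.of A M) hx (subsingleton_ext _ (by lia))
    (subsingleton_ext _ (by lia))

theorem maximalIdeal_comap_of_isIntegral (R A : Type*) [CommRing R] [IsLocalRing R] [CommRing A]
    [IsLocalRing A] [Algebra R A] [Algebra.IsIntegral R A] :
    (maximalIdeal A).comap (algebraMap R A) = maximalIdeal R :=
  eq_maximalIdeal (Ideal.isMaximal_comap_of_isIntegral_of_isMaximal (maximalIdeal A))

theorem eq_maximalIdeal_of_maximalIdeal_le_comap {R A : Type*} [CommRing R] [IsLocalRing R]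
    [CommRing A] [IsLocalRing A] [Algebra R A] [Algebra.IsIntegral R A] {P : Ideal A} [P.IsPrime]
    (h : maximalIdeal R ≤ P.comap (algebraMap R A)) : P = maximalIdeal A := by
  have comap_eq := (maximalIdeal.isMaximal R).eq_of_le (Ideal.IsPrime.ne_top inferInstance) h
  exact eq_maximalIdeal
    (Ideal.isMaximal_of_isIntegral_of_isMaximal_comap P (comap_eq ▸ maximalIdeal.isMaximal R))

theorem exists_algebraMap_isSMulRegular (R : Type*) {A : Type*} [CommRing R] [IsLocalRing R]
    [CommRing A] [IsLocalRing A] [IsNoetherianRing A] [Algebra R A] [Algebra.IsIntegral R A]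
    {M : Type*} [AddCommGroup M] [Module A M] [Module.Finite A M] {x : A}
    (hxm : x ∈ maximalIdeal A) (hx : IsSMulRegular M x) :
    ∃ r ∈ maximalIdeal R, IsSMulRegular M (algebraMap R A r) := by
  by_contra! not_regular
  have mem_iUnion : ∀ r ∈ maximalIdeal R,
      algebraMap R A r ∈ ⋃ P ∈ associatedPrimes A M, (P : Set A) := fun r hr ↦
    (biUnion_associatedPrimes_eq_compl_regular A M).symm.subset (not_regular r hr)
  obtain ⟨P, hP, hle⟩ : ∃ P ∈ associatedPrimes A M, maximalIdeal R ≤ P.comap (algebraMap R A) :=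
    (Ideal.subset_union_prime_finite (associatedPrimes.finite A M) ⊥ ⊥
      fun P hP _ _ ↦ hP.isPrime.comap _).1 fun r hr ↦ by simpa using mem_iUnion r hr
  have := hP.isPrime
  obtain rfl := eq_maximalIdeal_of_maximalIdeal_le_comap hle
  exact (biUnion_associatedPrimes_eq_compl_regular A M).subset (Set.mem_biUnion hP hxm) hx

theorem exists_isRegular_map_algebraMap (R : Type*) {A : Type u} [CommRing R] [IsLocalRing R]
    [CommRing A] [Small.{v} A] [IsLocalRing A] [IsNoetherianRing A] [Algebra R A]
    [Algebra.IsIntegral R A] {M : Type v} [AddCommGroup M] [Module A M] [Module.Finite A M] {n : ℕ}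
    (h : ∃ as : List A, as.length = n ∧ (∀ a ∈ as, a ∈ maximalIdeal A) ∧ IsRegular M as) :
    ∃ rs : List R, rs.length = n ∧ (∀ r ∈ rs, r ∈ maximalIdeal R) ∧
      IsRegular M (rs.map (algebraMap R A)) := by
  induction n generalizing M with
  | zero =>
    obtain ⟨_, -, -, has⟩ := h
    have : Nontrivial M := has.nontrivial
    exact ⟨[], rfl, by simp, .nil A M⟩
  | succ n ih =>
    obtain ⟨x, hxm, hx⟩ : ∃ x ∈ maximalIdeal A, IsSMulRegular M x := by
      obtain ⟨_ | ⟨x, as⟩, hlen, hmem, has⟩ := h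
      · simp at hlen
      · exact ⟨x, hmem x (by simp), ((isRegular_cons_iff M x as).1 has).1⟩
    obtain ⟨r, hrm, hr⟩ := exists_algebraMap_isSMulRegular R hxm hx
    have hrm' : algebraMap R A r ∈ maximalIdeal A :=
      (maximalIdeal_comap_of_isIntegral R A).ge hrm
    obtain ⟨rs, hlen, hmem, hrs⟩ := ih (exists_isRegular_quotSMulTop hrm' hr h)
    exact ⟨r :: rs, by rw [List.length_cons, hlen], List.forall_mem_cons.2 ⟨hrm, hmem⟩,
      (isRegular_cons_iff M _ _).2 ⟨hr, hrs⟩⟩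

theorem isRegular_map_algebraMap_iff {R A M : Type*} [CommRing R] [CommRing A] [Algebra R A]
    [AddCommGroup M] [Module R M] [Module A M] [IsScalarTower R A M] {rs : List R} :
    IsRegular M (rs.map (algebraMap R A)) ↔ IsRegular M rs :=
  (AddEquiv.refl M).isRegular_congr <| List.forall₂_map_left_iff.2 <|
    List.forall₂_same.2 fun r _ ↦ algebraMap_smul A r

theorem moduleDepth_le_of_isIntegral (R : Type*) (A : Type u) [CommRing R] [IsLocalRing R]
    [CommRing A] [Small.{v} A] [IsLocalRing A] [IsNoetherianRing A] [Algebra R A]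
    [Algebra.IsIntegral R A] (M : Type v) [AddCommGroup M] [Module A M] [Module R M]
    [IsScalarTower R A M] [Module.Finite A M] : moduleDepth A M ≤ moduleDepth R M := by
  refine sSup_le ?_
  rintro _ ⟨as, rfl, hmem, has⟩
  obtain ⟨rs, hlen, hrsm, hrs⟩ := exists_isRegular_map_algebraMap R ⟨as, rfl, hmem, has⟩
  exact le_sSup ⟨rs, congrArg _ hlen, hrsm, isRegular_map_algebraMap_iff.1 hrs⟩

theorem isWeaklyRegular_of_comp_eq_id {R M N : Type*} [CommRing R] [AddCommGroup M] [Module R M]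
    [AddCommGroup N] [Module R N] {f : N →ₗ[R] M} {g : M →ₗ[R] N} (hgf : g ∘ₗ f = .id)
    {rs : List R} (h : IsWeaklyRegular M rs) : IsWeaklyRegular N rs := by
  induction rs generalizing M N with
  | nil => exact .nil R N
  | cons r rs ih =>
    rw [isWeaklyRegular_cons_iff] at h ⊢
    have map_comp_map : QuotSMulTop.map r g ∘ₗ QuotSMulTop.map r f = .id := by
      rw [← QuotSMulTop.map_comp, hgf, QuotSMulTop.map_id]
    exact ⟨h.1.of_injective f (LinearMap.injective_of_comp_eq_id _ _ hgf), ih map_comp_map h.2⟩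

theorem moduleDepth_le_of_comp_eq_id {R M N : Type*} [CommRing R] [IsLocalRing R] [AddCommGroup M]
    [Module R M] [AddCommGroup N] [Module R N] [Module.Finite R N] [Nontrivial N]
    {f : N →ₗ[R] M} {g : M →ₗ[R] N} (hgf : g ∘ₗ f = .id) : moduleDepth R M ≤ moduleDepth R N := by
  refine sSup_le_sSup ?_
  rintro _ ⟨rs, rfl, hmem, hrs⟩
  exact ⟨rs, rfl, hmem, .of_isWeaklyRegular_of_mem_maximalIdeal N hmem
    (isWeaklyRegular_of_comp_eq_id hgf hrs.toIsWeaklyRegular)⟩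

theorem IsCMModule.of_comp_eq_id {R : Type*} {A : Type u} [CommRing R] [IsLocalRing R]
    [IsNoetherianRing R] [CommRing A] [Small.{v} A] [IsLocalRing A] [IsNoetherianRing A]
    [Algebra R A] [Algebra.IsIntegral R A] {M : Type v} [AddCommGroup M] [Module A M] [Module R M]
    [IsScalarTower R A M] [Module.Finite A M] {N : Type*} [AddCommGroup N] [Module R N]
    [Module.Finite R N] {f : N →ₗ[R] M} {g : M →ₗ[R] N} (hgf : g ∘ₗ f = .id)
    (hM : IsCMModule A M) : IsCMModule R N := by
  intro _
  have f_injective := LinearMap.injective_of_comp_eq_id _ _ hgf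
  have : Nontrivial M := f_injective.nontrivial
  have depth_le : moduleDepth A M ≤ moduleDepth R N :=
    (moduleDepth_le_of_isIntegral R A M).trans (moduleDepth_le_of_comp_eq_id hgf)
  refine (moduleDepth_le_moduleDim R N).antisymm ?_
  calc moduleDim R N ≤ moduleDim R M := moduleDim_le_of_injective f f_injective
    _ = moduleDim A M := (moduleDim_eq_of_isIntegral R A M).symm
    _ = moduleDepth A M := (hM inferInstance).symm
    _ ≤ moduleDepth R N := WithBot.coe_le_coe.2 depth_le

end Depth

section Chain

variable {α : Type*}

theorem comp_succAbove_castSucc_eq_comp_succAbove_succ {n : ℕ} {E : Fin (n + 1) → α} {i : Fin n}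
    (hi : E i.castSucc = E i.succ) : E ∘ i.castSucc.succAbove = E ∘ i.succ.succAbove := by
  ext j
  rcases lt_trichotomy j i with h | rfl | h
  · simp only [Function.comp_apply, Fin.succAbove_castSucc_of_lt i j h,
      Fin.succAbove_succ_of_le i j h.le]
  · simp only [Function.comp_apply, Fin.succAbove_castSucc_self, Fin.succAbove_succ_self, hi]
  · simp only [Function.comp_apply, Fin.succAbove_castSucc_of_le i j h.le,
      Fin.succAbove_succ_of_lt i j h]

theorem range_comp_succAbove_succ {n : ℕ} {E : Fin (n + 1) → α} {i : Fin n}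
    (hi : E i.castSucc = E i.succ) : Set.range (E ∘ i.succ.succAbove) = Set.range E := by
  refine (Set.range_comp_subset_range _ _).antisymm ?_
  rintro _ ⟨j, rfl⟩
  obtain rfl | hj := eq_or_ne j i.succ
  · exact ⟨i, by simpa using hi⟩
  · obtain ⟨m, rfl⟩ := Fin.exists_succAbove_eq hj
    exact ⟨m, rfl⟩

theorem exists_strictMono_of_monotone [PartialOrder α] {ℓ : ℕ} {E : Fin (ℓ + 1) → α}
    (hE : Monotone E) :
    ∃ (k : ℕ) (F : Fin (k + 1) → α), StrictMono F ∧ Set.range F = Set.range E ∧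
      ∀ j : Fin k, ∃ i : Fin ℓ, F j.castSucc = E i.castSucc ∧ F j.succ = E i.succ := by
  induction ℓ with
  | zero => exact ⟨0, E, Subsingleton.strictMono (α := Fin 1) E, rfl, fun j ↦ j.elim0⟩
  | succ ℓ ih =>
    by_cases hE' : StrictMono E
    · exact ⟨ℓ + 1, E, hE', rfl, fun j ↦ ⟨j, rfl, rfl⟩⟩
    obtain ⟨i, hi⟩ : ∃ i : Fin (ℓ + 1), E i.castSucc = E i.succ := by
      by_contra! h
      exact hE' <| Fin.strictMono_iff_lt_succ.2 fun i ↦ (hE i.castSucc_le_succ).lt_of_ne (h i)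
    obtain ⟨k, F, hF, hrange, hstep⟩ := ih (hE.comp i.succ.strictMono_succAbove.monotone)
    refine ⟨k, F, hF, hrange.trans (range_comp_succAbove_succ hi), fun j ↦ ?_⟩
    obtain ⟨m, hm, hm'⟩ := hstep j
    refine ⟨i.succAbove m, ?_, ?_⟩
    · rw [hm, ← comp_succAbove_castSucc_eq_comp_succAbove_succ hi, Function.comp_apply,
        Fin.castSucc_succAbove_castSucc]
    · rw [hm', Function.comp_apply, Fin.succ_succAbove_succ]

end Chain

section Filtration

variable {R : Type*} [CommRing R] {M : Type*} [AddCommGroup M] [Module R M]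

theorem bot_mem_dimFiltrationTerms : ⊥ ∈ dimFiltrationTerms R M := by
  have moduleDim_bot : moduleDim R (⊥ : Submodule R M) = ⊥ := moduleDim_eq_bot_iff.2 inferInstance
  refine ⟨le_refl (moduleDim R (⊥ : Submodule R M)), fun N (hN : moduleDim R N ≤ _) ↦ ?_⟩
  rw [moduleDim_bot, le_bot_iff, moduleDim_eq_bot_iff, Submodule.subsingleton_iff_eq_bot] at hN
  exact hN.le

theorem top_mem_dimFiltrationTerms : ⊤ ∈ dimFiltrationTerms R M :=
  ⟨le_refl (moduleDim R (⊤ : Submodule R M)), fun _ _ ↦ le_top⟩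

theorem isDimFiltration_iff {ℓ : ℕ} {D : Fin (ℓ + 1) → Submodule R M} :
    IsDimFiltration R M ℓ D ↔ StrictMono D ∧ Set.range D = dimFiltrationTerms R M := by
  constructor
  · rintro ⟨hbot, -, hmono, hlargest, hmem⟩
    refine ⟨hmono, Set.Subset.antisymm ?_ fun N hN ↦ ?_⟩
    · rintro _ ⟨i, rfl⟩
      cases i using Fin.cases with
      | zero => exact hbot ▸ bot_mem_dimFiltrationTerms
      | succ i => exact hlargest i
    · obtain rfl | hN0 := eq_or_ne N ⊥
      exacts [⟨0, hbot⟩, hmem N hN0 hN]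
  · rintro ⟨hmono, hrange⟩
    obtain ⟨i, hi⟩ := hrange.ge bot_mem_dimFiltrationTerms
    obtain ⟨j, hj⟩ := hrange.ge top_mem_dimFiltrationTerms
    exact ⟨le_bot_iff.1 (hi ▸ hmono.monotone (Fin.zero_le i)),
      top_le_iff.1 (hj ▸ hmono.monotone (Fin.le_last j)), hmono,
      fun i ↦ hrange.le ⟨i.succ, rfl⟩, fun N _ hN ↦ hrange.ge hN⟩

theorem IsSeqCM.of_monotone [IsLocalRing R] {ℓ : ℕ} {E : Fin (ℓ + 1) → Submodule R M}
    (hE : Monotone E) (hrange : Set.range E = dimFiltrationTerms R M)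
    (hCM : ∀ i : Fin ℓ, IsCMModule R
      (↥(E i.succ) ⧸ (E i.castSucc).comap (E i.succ).subtype)) : IsSeqCM R M := by
  obtain ⟨k, F, hF, hFE, hstep⟩ := exists_strictMono_of_monotone hE
  refine ⟨k, F, isDimFiltration_iff.2 ⟨hF, hFE.trans hrange⟩, fun j ↦ ?_⟩
  obtain ⟨i, hi, hi'⟩ := hstep j
  rw [hi, hi']
  exact hCM i

end Filtration

section Retract

variable {R A : Type*} [CommRing R] [CommRing A] [Algebra R A]
  {M N : Type*} [AddCommGroup M] [Module A M] [Module R M] [IsScalarTower R A M] [AddCommGroup N]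
  [Module R N]

theorem exists_comp_eq_id_quotient_comap {f : N →ₗ[R] M} {g : M →ₗ[R] N} (hgf : g ∘ₗ f = .id)
    {P Q : Submodule A M} (hP : ∀ x ∈ P, f (g x) ∈ P) (hQ : ∀ x ∈ Q, f (g x) ∈ Q) :
    let P' := (P.restrictScalars R).comap f
    let Q' := (Q.restrictScalars R).comap f
    ∃ (f' : (↥Q' ⧸ P'.comap Q'.subtype) →ₗ[R] ↥Q ⧸ P.comap Q.subtype)
      (g' : (↥Q ⧸ P.comap Q.subtype) →ₗ[R] ↥Q' ⧸ P'.comap Q'.subtype), g' ∘ₗ f' = .id := by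
  intro P' Q'
  let K : Submodule R Q := (P.comap Q.subtype).restrictScalars R
  let e : (↥Q ⧸ K) ≃ₗ[R] ↥Q ⧸ P.comap Q.subtype :=
    Submodule.Quotient.restrictScalarsEquiv R (P.comap Q.subtype)
  let f₀ : ↥Q' →ₗ[R] ↥Q := f.submoduleComap (Q.restrictScalars R)
  let g₀ : ↥Q →ₗ[R] ↥Q' := g.restrict (p := Q.restrictScalars R) hQ
  refine ⟨e ∘ₗ Submodule.mapQ _ K f₀ fun x hx ↦ hx,
    Submodule.mapQ K _ g₀ (fun x hx ↦ hP x hx) ∘ₗ e.symm, ?_⟩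
  ext x
  exact congrArg Submodule.Quotient.mk (Subtype.ext (LinearMap.congr_fun hgf x))

variable [Algebra.IsIntegral R A]

variable (R) in
theorem moduleDim_restrictScalars (P : Submodule A M) :
    moduleDim R (P.restrictScalars R) = moduleDim A P :=
  (moduleDim_eq_of_isIntegral R A (P.restrictScalars R)).symm

theorem moduleDim_comap_restrictScalars_le {f : N →ₗ[R] M} (hf : Function.Injective f)
    (P : Submodule A M) : moduleDim R ((P.restrictScalars R).comap f) ≤ moduleDim A P := by
  rw [← moduleDim_restrictScalars R P]
  exact moduleDim_le_of_injective (f.submoduleComap (P.restrictScalars R))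
    fun _ _ h ↦ Subtype.ext (hf (congrArg Subtype.val h))

theorem moduleDim_map_restrictScalars_le (g : M →ₗ[R] N) (P : Submodule A M) :
    moduleDim R ((P.restrictScalars R).map g) ≤ moduleDim A P := by
  rw [← moduleDim_restrictScalars R P]
  exact moduleDim_le_of_surjective (g.submoduleMap (P.restrictScalars R))
    (g.submoduleMap_surjective _)

theorem moduleDim_span_image_le (f : N →ₗ[R] M) (N' : Submodule R N) :
    moduleDim A (Submodule.span A (f '' N')) ≤ moduleDim R N' := by
  rw [moduleDim_eq_of_isIntegral R A]
  refine moduleDim_anti_annihilator fun r hr ↦ ?_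
  rw [← Module.comap_annihilator (R := A), Ideal.mem_comap]
  refine (Submodule.mem_annihilator_span _ _).2 ?_
  rintro ⟨_, x, hx, rfl⟩
  rw [algebraMap_smul, ← map_smul, Submodule.mem_annihilator.1 hr x hx, map_zero]

theorem IsLargestOfDimLE.comap_restrictScalars {f : N →ₗ[R] M} (hf : Function.Injective f)
    {d : WithBot ℕ∞} {P : Submodule A M} (hP : IsLargestOfDimLE d P) :
    IsLargestOfDimLE d ((P.restrictScalars R).comap f) := by
  refine ⟨(moduleDim_comap_restrictScalars_le hf P).trans hP.1,
    fun N' (hN' : moduleDim R N' ≤ d) ↦ ?_⟩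
  have span_le : Submodule.span A (f '' N') ≤ P := hP.2 ((moduleDim_span_image_le f N').trans hN')
  exact fun x hx ↦ span_le (Submodule.subset_span ⟨x, hx, rfl⟩)

/-- The image `g '' P` has dimension at most `d` over `R`, hence lies in the contraction of `P`,
which is the largest such submodule of `N`. -/
theorem IsLargestOfDimLE.apply_apply_mem {f : N →ₗ[R] M} (hf : Function.Injective f)
    (g : M →ₗ[R] N) {d : WithBot ℕ∞} {P : Submodule A M} (hP : IsLargestOfDimLE d P) {x : M}
    (hx : x ∈ P) : f (g x) ∈ P :=
  (hP.comap_restrictScalars hf).2 ((moduleDim_map_restrictScalars_le g P).trans hP.1)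
    (Submodule.mem_map_of_mem (p := P.restrictScalars R) hx)

theorem range_comap_restrictScalars_eq [IsNoetherian A M] {f : N →ₗ[R] M}
    (hf : Function.Injective f) {ι : Type*} {D : ι → Submodule A M}
    (hD : Set.range D = dimFiltrationTerms A M) :
    Set.range (fun i ↦ ((D i).restrictScalars R).comap f) = dimFiltrationTerms R N := by
  refine Set.Subset.antisymm ?_ fun N' hN' ↦ ?_
  · rintro _ ⟨i, rfl⟩
    exact (IsLargestOfDimLE.comap_restrictScalars hf (hD.le ⟨i, rfl⟩)).mem_dimFiltrationTerms
  · obtain ⟨P, hP⟩ := exists_isLargestOfDimLE A M (moduleDim R N')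
    obtain ⟨i, rfl⟩ := hD.ge hP.mem_dimFiltrationTerms
    exact ⟨i, (hP.comap_restrictScalars hf).unique hN'⟩

end Retract

section SequentiallyCohenMacaulay

universe u v

theorem IsSeqCM.of_comp_eq_id {R : Type*} {A : Type u} [CommRing R] [IsLocalRing R]
    [IsNoetherianRing R] [CommRing A] [Small.{v} A] [IsLocalRing A] [IsNoetherianRing A]
    [Algebra R A] [Algebra.IsIntegral R A] {M : Type v} [AddCommGroup M] [Module A M] [Module R M]
    [IsScalarTower R A M] [Module.Finite A M] {N : Type*} [AddCommGroup N] [Module R N]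
    [Module.Finite R N] {f : N →ₗ[R] M} {g : M →ₗ[R] N} (hgf : g ∘ₗ f = .id)
    (hM : IsSeqCM A M) : IsSeqCM R N := by
  obtain ⟨ℓ, D, hD, hCM⟩ := hM
  obtain ⟨hmono, hrange⟩ := isDimFiltration_iff.1 hD
  have hf := LinearMap.injective_of_comp_eq_id _ _ hgf
  have mem_D (i : Fin (ℓ + 1)) (x : M) (hx : x ∈ D i) : f (g x) ∈ D i :=
    IsLargestOfDimLE.apply_apply_mem hf g (hrange.le ⟨i, rfl⟩) hx
  refine .of_monotone (E := fun i ↦ ((D i).restrictScalars R).comap f)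
    (fun _ _ hij ↦ Submodule.comap_mono (hmono.monotone hij))
    (range_comap_restrictScalars_eq hf hrange) fun i ↦ ?_
  obtain ⟨f', g', hgf'⟩ := exists_comp_eq_id_quotient_comap hgf (mem_D i.castSucc) (mem_D i.succ)
  exact (hCM i).of_comp_eq_id hgf'

end SequentiallyCohenMacaulay

section Invariants

theorem exists_comp_linearMap_eq_id_of_isInvariant (R A G : Type*) [CommRing R] [CommRing A]
    [Algebra R A] [FaithfulSMul R A] [Group G] [Finite G] [MulSemiringAction G A]
    [SMulCommClass G R A] [Algebra.IsInvariant R A G] (hG : IsUnit (Nat.card G : A)) :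
    ∃ ρ : A →ₗ[R] R, ρ ∘ₗ Algebra.linearMap R A = .id := by
  have := Fintype.ofFinite G
  have := Algebra.IsInvariant.isIntegral R A G
  have : Invertible (Fintype.card G : R) := by
    refine (isUnit_of_map_unit (algebraMap R A) _ ?_).invertible
    rwa [map_natCast, ← Nat.card_eq_fintype_card]
  let reynolds := (Representation.ofDistribMulAction R G A).averageMap
  have reynolds_mem (a : A) : reynolds a ∈ LinearMap.range (Algebra.linearMap R A) :=
    Algebra.IsInvariant.isInvariant (G := G) _
      ((Representation.ofDistribMulAction R G A).averageMap_invariant a)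
  let e := LinearEquiv.ofInjective (Algebra.linearMap R A) (FaithfulSMul.algebraMap_injective R A)
  refine ⟨e.symm ∘ₗ reynolds.codRestrict _ reynolds_mem, ?_⟩
  ext
  refine e.symm_apply_eq.2 (Subtype.ext ?_)
  exact Representation.averageMap_id _ _ fun σ ↦ smul_algebraMap σ 1

theorem isInvariant_fixedSubring (A : Type*) [CommRing A] (G : Subgroup (A ≃+* A)) :
    Algebra.IsInvariant (fixedSubring A G) A G :=
  ⟨fun a ha ↦ ⟨⟨a, fun σ hσ ↦ ha ⟨σ, hσ⟩⟩, rfl⟩⟩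

theorem smulCommClass_fixedSubring (A : Type*) [CommRing A] (G : Subgroup (A ≃+* A)) :
    SMulCommClass G (fixedSubring A G) A :=
  ⟨fun σ r a ↦ by
    change σ.1 (r.1 * a) = r.1 * σ.1 a
    rw [map_mul, r.2 σ.1 σ.2]⟩

end Invariants

/-- If `A` is a sequentially Cohen-Macaulay local ring and `G` is a finite
group of automorphisms of `A` whose order is invertible in `A`, then the invariant subring
`A^G` is a sequentially Cohen-Macaulay local ring. -/
theorem stmt10 (A : Type*) [CommRing A] [IsNoetherianRing A] [IsLocalRing A]
    (G : Subgroup (A ≃+* A)) [Finite G] (hG : IsUnit (Nat.card G : A))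
    [IsNoetherianRing (fixedSubring A G)] [IsLocalRing (fixedSubring A G)]
    (hA : IsSeqCMRing A) :
    IsSeqCMRing (fixedSubring A G) := by
  have := isInvariant_fixedSubring A G
  have := smulCommClass_fixedSubring A G
  have := Algebra.IsInvariant.isIntegral (fixedSubring A G) A G
  obtain ⟨ρ, hρ⟩ := exists_comp_linearMap_eq_id_of_isInvariant (fixedSubring A G) A G hG
  exact hA.of_comp_eq_id hρ
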